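/- arXiv:2309.05585 — 2 statements merged into one kernel-verified Lean document; each statement's English description precedes it below -/
import Mathlib

section
/- Let d ≥ 1, Ω ⊆ ℝ^d open, ν ≥ 0, t₀ < t₁, and let u : (t₀,t₁) × Ω → ℝ^d and p : (t₀,t₁) × Ω → ℝ be smooth with div u = 0 and ∂ₜu + (u·∇)u − 2ν div D(u) + ∇p = 0 on (t₀,t₁) × Ω. Let φ : (t₀,t₁) × Ω → ℝ be C¹, satisfy the transport equation ∂ₜφ + u·∇φ = 0 on (t₀,t₁) × Ω, and suppose there is a compact set K ⊂ Ω such that supp φ(t,·) ⊆ K for all t ∈ (t₀,t₁). Then for every t ∈ (t₀,t₁), the map t ↦ ∫_Ω φ u dx is differentiable with derivative ∫_Ω [ −2ν D(u)∇φ + p ∇φ ] dx. -/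
/-!
The theorem is differentiation under the integral sign followed by integration by parts.

Write `Gⱼ` for the columns of the tensor `2ν D(u) - u ⊗ u - p I` (`flux`). The momentum equation,
`div u = 0` and the transport equation combine into the pointwise identity
`∂ₜ(φ u) = -2ν D(u)∇φ + p ∇φ + ∑ⱼ ∂ⱼ(φ Gⱼ)` on `Ω` (`momentum_rate_eq`, in rearranged form).

Since `φ(t,·)` is supported in the compact set `K ⊆ Ω`, each `φ Gⱼ`, extended by zero off `K`, is
a compactly supported `C¹` field on the whole space, so `∂ⱼ(φ Gⱼ)` integrates to zero
(`setIntegral_fderiv_apply_eq_zero`). All integrals over `Ω` reduce to integrals over `K`,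
where `∂ₜ(φ u)` is bounded locally uniformly in time; this is the domination needed to
differentiate under the integral (`hasDerivAt_setIntegral_of_contDiffOn`).
-/


open MeasureTheory Real Set Filter Matrix

noncomputable section

/-- The Jacobian matrix of a vector field on Euclidean space. -/
def jac {d : ℕ} (u : EuclideanSpace ℝ (Fin d) → EuclideanSpace ℝ (Fin d))
    (x : EuclideanSpace ℝ (Fin d)) : Matrix (Fin d) (Fin d) ℝ :=
  fun i j => fderiv ℝ u x (EuclideanSpace.single j 1) i

/-- The rate-of-deformation (symmetric gradient) tensor. -/
def defT {d : ℕ} (u : EuclideanSpace ℝ (Fin d) → EuclideanSpace ℝ (Fin d))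
    (x : EuclideanSpace ℝ (Fin d)) : Matrix (Fin d) (Fin d) ℝ :=
  (1/2 : ℝ) • (jac u x + (jac u x)ᵀ)

/-- The divergence of a vector field. -/
def dvg {d : ℕ} (u : EuclideanSpace ℝ (Fin d) → EuclideanSpace ℝ (Fin d))
    (x : EuclideanSpace ℝ (Fin d)) : ℝ :=
  Matrix.trace (jac u x)

/-- The gradient of a scalar field, as a Euclidean vector. -/
def grd {d : ℕ} (φ : EuclideanSpace ℝ (Fin d) → ℝ)
    (x : EuclideanSpace ℝ (Fin d)) : EuclideanSpace ℝ (Fin d) :=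
  (EuclideanSpace.equiv (Fin d) ℝ).symm (fun i => fderiv ℝ φ x (EuclideanSpace.single i 1))

/-- Matrix acting on a Euclidean vector. -/
def matVec {d : ℕ} (A : Matrix (Fin d) (Fin d) ℝ) (v : EuclideanSpace ℝ (Fin d)) :
    EuclideanSpace ℝ (Fin d) :=
  (EuclideanSpace.equiv (Fin d) ℝ).symm (A.mulVec (EuclideanSpace.equiv (Fin d) ℝ v))

/-- Euclidean dot product. -/
def dotp {d : ℕ} (a b : EuclideanSpace ℝ (Fin d)) : ℝ := ∑ i, a i * b i

/-- Frobenius inner product of matrices. -/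
def frob {d : ℕ} (A B : Matrix (Fin d) (Fin d) ℝ) : ℝ := ∑ i, ∑ j, A i j * B i j

/-- Cross product on Euclidean 3-space. -/
def cross (a b : EuclideanSpace ℝ (Fin 3)) : EuclideanSpace ℝ (Fin 3) :=
  (EuclideanSpace.equiv (Fin 3) ℝ).symm
    (crossProduct ((EuclideanSpace.equiv (Fin 3) ℝ) a) ((EuclideanSpace.equiv (Fin 3) ℝ) b))

/-- divergence of the rate-of-deformation tensor: i-th component is ∑ⱼ ∂ⱼ D(u)ᵢⱼ. -/
def divD {d : ℕ} (u : EuclideanSpace ℝ (Fin d) → EuclideanSpace ℝ (Fin d))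
    (x : EuclideanSpace ℝ (Fin d)) : EuclideanSpace ℝ (Fin d) :=
  (EuclideanSpace.equiv (Fin d) ℝ).symm
    (fun i => ∑ j, fderiv ℝ (fun y => defT u y i j) x (EuclideanSpace.single j 1))

/-- Differentiation under the integral over a compact set `K`, for an integrand that is jointly
`C¹` on a product of a time interval with an open neighbourhood of `K`. Integrability of the
time derivative is part of the conclusion. -/
theorem hasDerivAt_setIntegral_of_contDiffOn {E G : Type*} [NormedAddCommGroup E]
    [NormedSpace ℝ E] [MeasurableSpace E] [BorelSpace E]
    [NormedAddCommGroup G] [NormedSpace ℝ G] {μ : Measure E} [IsFiniteMeasureOnCompacts μ]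
    {t₀ t₁ : ℝ} {Ω K : Set E} (hΩ : IsOpen Ω) (hK : IsCompact K) (hKΩ : K ⊆ Ω) {F : ℝ → E → G}
    (hF : ContDiffOn ℝ 1 (Function.uncurry F) (Set.Ioo t₀ t₁ ×ˢ Ω)) {t : ℝ}
    (ht : t ∈ Set.Ioo t₀ t₁) :
    IntegrableOn (fun x => deriv (fun s => F s x) t) K μ ∧
      HasDerivAt (fun s => ∫ x in K, F s x ∂μ) (∫ x in K, deriv (fun s => F s x) t ∂μ) t := by
  have hO : IsOpen (Set.Ioo t₀ t₁ ×ˢ Ω) := isOpen_Ioo.prod hΩ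
  have hder : ∀ s ∈ Set.Ioo t₀ t₁, ∀ x ∈ Ω, HasDerivAt (fun s => F s x)
      (fderiv ℝ (Function.uncurry F) (s, x) (1, 0)) s := by
    intro s hs x hx
    have h1 : HasFDerivAt (Function.uncurry F) (fderiv ℝ (Function.uncurry F) (s, x)) (s, x) :=
      ((hF.differentiableOn one_ne_zero).differentiableAt (hO.mem_nhds ⟨hs, hx⟩)).hasFDerivAt
    have h2 : HasDerivAt (fun r : ℝ => (r, x)) ((1 : ℝ), (0 : E)) s :=
      (hasDerivAt_id s).prodMk (hasDerivAt_const s x)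
    exact h1.comp_hasDerivAt s h2
  have hcont : ContinuousOn (fun q : ℝ × E => fderiv ℝ (Function.uncurry F) q (1, 0))
      (Set.Ioo t₀ t₁ ×ˢ Ω) :=
    (hF.continuousOn_fderiv_of_isOpen hO le_rfl).clm_apply continuousOn_const
  have hslice : ∀ s ∈ Set.Ioo t₀ t₁, MapsTo (fun x : E => (s, x)) K (Set.Ioo t₀ t₁ ×ˢ Ω) :=
    fun s hs x hx => ⟨hs, hKΩ hx⟩
  have hFc : ∀ s ∈ Set.Ioo t₀ t₁, ContinuousOn (F s) K := fun s hs =>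
    hF.continuousOn.comp (by fun_prop) (hslice s hs)
  -- The dominating constant is a bound for `‖∂ₜF‖` on a compact cylinder `[a, b] × K`.
  obtain ⟨a, b, hab, hsub⟩ : ∃ a b, t ∈ Set.Ioo a b ∧ Set.Icc a b ⊆ Set.Ioo t₀ t₁ := by
    obtain ⟨a, ha⟩ := exists_between ht.1
    obtain ⟨b, hb⟩ := exists_between ht.2
    exact ⟨a, b, ⟨ha.2, hb.1⟩, fun s hs => ⟨ha.1.trans_le hs.1, hs.2.trans_lt hb.2⟩⟩
  obtain ⟨C, hC⟩ := ((isCompact_Icc (a := a) (b := b)).prod hK).exists_bound_of_continuousOn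
    (hcont.mono (Set.prod_mono hsub hKΩ))
  have hae : ∀ᵐ x ∂(μ.restrict K), x ∈ K := ae_restrict_mem hK.measurableSet
  have key := hasDerivAt_integral_of_dominated_loc_of_deriv_le (μ := μ.restrict K)
    (F := F) (F' := fun s x => fderiv ℝ (Function.uncurry F) (s, x) (1, 0))
    (bound := fun _ => C) (x₀ := t) (s := Set.Ioo a b) (Ioo_mem_nhds hab.1 hab.2)
    (by
      filter_upwards [Ioo_mem_nhds ht.1 ht.2] with s hs
      exact ((hFc s hs).integrableOn_compact hK).aestronglyMeasurable)
    ((hFc t ht).integrableOn_compact hK)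
    (((hcont.comp (by fun_prop) (hslice t ht)).integrableOn_compact hK).aestronglyMeasurable)
    (by
      filter_upwards [hae] with x hx s hs
      exact hC (s, x) ⟨Ioo_subset_Icc_self hs, hx⟩)
    (integrableOn_const hK.measure_lt_top.ne)
    (by
      filter_upwards [hae] with x hx s hs
      exact hder s (hsub (Ioo_subset_Icc_self hs)) x (hKΩ hx))
  have hcongr : ∀ᵐ x ∂(μ.restrict K), fderiv ℝ (Function.uncurry F) (t, x) (1, 0)
      = deriv (fun s => F s x) t := by
    filter_upwards [hae] with x hx
    exact ((hder t ht x (hKΩ hx)).deriv).symm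
  rw [← integral_congr_ae hcongr]
  exact ⟨key.1.congr hcongr, key.2⟩

/-- The divergence theorem without boundary term: a partial derivative of a `C¹` function on `Ω`
supported in a compact `K ⊆ Ω` integrates to zero. No differentiability off `Ω` is assumed, because
the support condition makes the function vanish near every point outside `K`. -/
theorem setIntegral_fderiv_apply_eq_zero {E G : Type*} [NormedAddCommGroup E]
    [NormedSpace ℝ E] [MeasurableSpace E] [BorelSpace E] [FiniteDimensional ℝ E]
    [NormedAddCommGroup G] [NormedSpace ℝ G] {μ : Measure E} [μ.IsAddHaarMeasure]
    {Ω K : Set E} (hΩ : IsOpen Ω) (hK : IsCompact K) (hKΩ : K ⊆ Ω) {f : E → G}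
    (hf : ContDiffOn ℝ 1 f Ω) (hfK : tsupport f ⊆ K) (v : E) :
    IntegrableOn (fun x => fderiv ℝ f x v) K μ ∧ ∫ x in K, fderiv ℝ f x v ∂μ = 0 := by
  have hfc : ContDiff ℝ 1 f := contDiff_iff_contDiffAt.2 fun x => by
    by_cases hx : x ∈ tsupport f
    · exact hf.contDiffAt (hΩ.mem_nhds (hKΩ (hfK hx)))
    · exact contDiffAt_const.congr_of_eventuallyEq (notMem_tsupport_iff_eventuallyEq.1 hx)
  have hcs : HasCompactSupport f := hK.of_isClosed_subset (isClosed_tsupport f) hfK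
  have hcont : Continuous (fun x => fderiv ℝ f x v) :=
    (hfc.continuous_fderiv one_ne_zero).clm_apply continuous_const
  have hint : Integrable (fun x => fderiv ℝ f x v) μ :=
    hcont.integrable_of_hasCompactSupport (hcs.fderiv_apply ℝ v)
  refine ⟨hint.integrableOn, ?_⟩
  rw [setIntegral_eq_integral_of_forall_compl_eq_zero]
  · -- Integration by parts against the constant function `1`.
    have := integral_smul_fderiv_eq_neg_fderiv_smul_of_integrable (μ := μ)
      (f := fun _ : E => (1 : ℝ)) (g := f) (v := v) (by simp) (by simpa using hint)
      (by simpa using hfc.continuous.integrable_of_hasCompactSupport hcs)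
      (fun x _ => by fun_prop) (fun x _ => hfc.differentiable one_ne_zero x)
    simpa using this
  · intro x hx
    have : x ∉ tsupport (fderiv ℝ f) := fun h => hx (hfK (tsupport_fderiv_subset ℝ h))
    rw [image_eq_zero_of_notMem_tsupport this]
    rfl

/-- The momentum flux of a velocity field `v` with pressure `q`: column `j` of the tensor
`2ν D(v) - v ⊗ v - q I`. Its sign is such that the momentum equation reads
`∂ₜv = ∑ⱼ ∂ⱼ (flux ν v q j)` when `div v = 0`. -/
def flux {d : ℕ} (ν : ℝ) (v : EuclideanSpace ℝ (Fin d) → EuclideanSpace ℝ (Fin d))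
    (q : EuclideanSpace ℝ (Fin d) → ℝ) (j : Fin d) (x : EuclideanSpace ℝ (Fin d)) :
    EuclideanSpace ℝ (Fin d) :=
  WithLp.toLp 2 fun i => 2 * ν * defT v x i j - v x i * v x j - q x * (if i = j then 1 else 0)

theorem contDiffOn_defT {d : ℕ} {Ω : Set (EuclideanSpace ℝ (Fin d))} (hΩ : IsOpen Ω)
    {v : EuclideanSpace ℝ (Fin d) → EuclideanSpace ℝ (Fin d)} (hv : ContDiffOn ℝ 2 v Ω)
    (i j : Fin d) : ContDiffOn ℝ 1 (fun x => defT v x i j) Ω := by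
  have hfd : ContDiffOn ℝ 1 (fderiv ℝ v) Ω := hv.fderiv_of_isOpen hΩ (by norm_num)
  have hjac : ∀ i j, ContDiffOn ℝ 1 (fun x => jac v x i j) Ω := fun i j =>
    (EuclideanSpace.proj (𝕜 := ℝ) i).contDiff.comp_contDiffOn (hfd.clm_apply contDiffOn_const)
  exact contDiffOn_const.mul ((hjac i j).add (hjac j i))

theorem contDiffOn_flux {d : ℕ} {Ω : Set (EuclideanSpace ℝ (Fin d))} (hΩ : IsOpen Ω) (ν : ℝ)
    {v : EuclideanSpace ℝ (Fin d) → EuclideanSpace ℝ (Fin d)}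
    {q : EuclideanSpace ℝ (Fin d) → ℝ} (hv : ContDiffOn ℝ 2 v Ω) (hq : ContDiffOn ℝ 1 q Ω)
    (j : Fin d) : ContDiffOn ℝ 1 (flux ν v q j) Ω := by
  have hvi : ∀ i, ContDiffOn ℝ 1 (fun x => v x i) Ω := fun i =>
    (EuclideanSpace.proj (𝕜 := ℝ) i).contDiff.comp_contDiffOn (hv.of_le (by norm_num))
  rw [contDiffOn_piLp]
  intro i
  exact ((contDiffOn_const.mul (contDiffOn_defT hΩ hv i j)).sub ((hvi i).mul (hvi j))).sub
    (hq.mul contDiffOn_const)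

theorem fderiv_flux_apply {d : ℕ} (ν : ℝ)
    {v : EuclideanSpace ℝ (Fin d) → EuclideanSpace ℝ (Fin d)}
    {q : EuclideanSpace ℝ (Fin d) → ℝ} {Ω : Set (EuclideanSpace ℝ (Fin d))} (hΩ : IsOpen Ω)
    (hv : ContDiffOn ℝ 2 v Ω) (hq : ContDiffOn ℝ 1 q Ω) {x : EuclideanSpace ℝ (Fin d)}
    (hx : x ∈ Ω) (i j : Fin d) (e : EuclideanSpace ℝ (Fin d)) :
    fderiv ℝ (flux ν v q j) x e i = 2 * ν * fderiv ℝ (fun y => defT v y i j) x e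
      - (v x i * fderiv ℝ v x e j + v x j * fderiv ℝ v x e i)
      - fderiv ℝ q x e * (if i = j then 1 else 0) := by
  have hxΩ := hΩ.mem_nhds hx
  have hG := ((contDiffOn_flux hΩ ν hv hq j).differentiableOn one_ne_zero).differentiableAt hxΩ
  have hD := ((contDiffOn_defT hΩ hv i j).differentiableOn one_ne_zero).differentiableAt hxΩ
  have hv' := (hv.differentiableOn two_ne_zero).differentiableAt hxΩ
  have hq' := (hq.differentiableOn one_ne_zero).differentiableAt hxΩ
  have hvi : ∀ i, HasFDerivAt (fun y => v y i)
      ((EuclideanSpace.proj (𝕜 := ℝ) i).comp (fderiv ℝ v x)) x := fun i =>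
    (EuclideanSpace.proj (𝕜 := ℝ) i).hasFDerivAt.comp x hv'.hasFDerivAt
  have h1 : HasFDerivAt (fun y => flux ν v q j y i)
      ((EuclideanSpace.proj (𝕜 := ℝ) i).comp (fderiv ℝ (flux ν v q j) x)) x :=
    (EuclideanSpace.proj (𝕜 := ℝ) i).hasFDerivAt.comp x hG.hasFDerivAt
  have h2 := ((hD.hasFDerivAt.const_mul (2 * ν)).sub ((hvi i).mul (hvi j))).sub
    (hq'.hasFDerivAt.mul_const (if i = j then (1 : ℝ) else 0))
  have h3 := congrArg (fun L => L e) (h1.unique h2)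
  split_ifs at h3 ⊢ <;> simpa [mul_comm] using h3

/-- The local balance at one instant and one point. Here `v'` and `f'` stand for the time
derivatives of the velocity `v` and the weight `f`, so `f • v' + f' • v` is the rate of change of
the weighted momentum `f v`; the sum is the divergence of the weighted momentum flux. -/
theorem momentum_rate_eq {d : ℕ} (ν : ℝ) {Ω : Set (EuclideanSpace ℝ (Fin d))} (hΩ : IsOpen Ω)
    {v : EuclideanSpace ℝ (Fin d) → EuclideanSpace ℝ (Fin d)}
    {q f : EuclideanSpace ℝ (Fin d) → ℝ} (hv : ContDiffOn ℝ 2 v Ω) (hq : ContDiffOn ℝ 1 q Ω)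
    (hf : ContDiffOn ℝ 1 f Ω) {x : EuclideanSpace ℝ (Fin d)} (hx : x ∈ Ω)
    (hdiv : dvg v x = 0) {v' : EuclideanSpace ℝ (Fin d)} {f' : ℝ}
    (hnse : v' + fderiv ℝ v x (v x) - (2 * ν) • divD v x + grd q x = 0)
    (htrans : f' + dotp (v x) (grd f x) = 0) :
    (-(2 * ν)) • matVec (defT v x) (grd f x) + q x • grd f x
      = (f x • v' + f' • v x)
        - ∑ j, fderiv ℝ (fun y => f y • flux ν v q j y) x (EuclideanSpace.single j 1) := by
  have hxΩ := hΩ.mem_nhds hx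
  have hf' := (hf.differentiableOn one_ne_zero).differentiableAt hxΩ
  have hG : ∀ j, DifferentiableAt ℝ (flux ν v q j) x := fun j =>
    ((contDiffOn_flux hΩ ν hv hq j).differentiableOn one_ne_zero).differentiableAt hxΩ
  ext i
  have hadv : fderiv ℝ v x (v x) i
      = ∑ j, v x j * fderiv ℝ v x (EuclideanSpace.single j 1) i := by
    conv_lhs => rw [← (EuclideanSpace.basisFun (Fin d) ℝ).sum_repr (v x)]
    simp [map_sum]
  have hn := congrArg (fun w : EuclideanSpace ℝ (Fin d) => w i) hnse
  have hflux : ∀ j, fderiv ℝ (fun y => f y • flux ν v q j y) x (EuclideanSpace.single j 1) i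
      = f x * (2 * ν * fderiv ℝ (fun y => defT v y i j) x (EuclideanSpace.single j 1)
      - (v x i * fderiv ℝ v x (EuclideanSpace.single j 1) j
        + v x j * fderiv ℝ v x (EuclideanSpace.single j 1) i)
      - fderiv ℝ q x (EuclideanSpace.single j 1) * (if i = j then 1 else 0))
      + fderiv ℝ f x (EuclideanSpace.single j 1) *
        (2 * ν * defT v x i j - v x i * v x j - q x * (if i = j then 1 else 0)) := by
    intro j
    rw [fderiv_fun_smul hf' (hG j), ← fderiv_flux_apply ν hΩ hv hq hx i j]
    simp [flux]
  -- The divergence of the weighted flux, expanded by the product rule and written with the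
  -- differential operators of the statement.
  have hsum : (∑ j, fderiv ℝ (fun y => f y • flux ν v q j y) x (EuclideanSpace.single j 1)) i
      = f x * (2 * ν * divD v x i - v x i * dvg v x - fderiv ℝ v x (v x) i - grd q x i)
        + 2 * ν * matVec (defT v x) (grd f x) i - v x i * dotp (v x) (grd f x)
        - q x * grd f x i := by
    have hmat : matVec (defT v x) (grd f x) i
        = ∑ j, defT v x i j * fderiv ℝ f x (EuclideanSpace.single j 1) := rfl
    have hpick : ∀ c : Fin d → ℝ, c i = ∑ j, c j * (if i = j then 1 else 0) := fun c => by simp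
    have hgq : grd q x i
        = ∑ j, fderiv ℝ q x (EuclideanSpace.single j 1) * (if i = j then 1 else 0) :=
      hpick fun j => fderiv ℝ q x (EuclideanSpace.single j 1)
    have hgf : grd f x i
        = ∑ j, fderiv ℝ f x (EuclideanSpace.single j 1) * (if i = j then 1 else 0) :=
      hpick fun j => fderiv ℝ f x (EuclideanSpace.single j 1)
    have hdD : divD v x i
        = ∑ j, fderiv ℝ (fun y => defT v y i j) x (EuclideanSpace.single j 1) := rfl
    have hdv : dvg v x = ∑ j, fderiv ℝ v x (EuclideanSpace.single j 1) j := rfl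
    have hdot : dotp (v x) (grd f x)
        = ∑ j, v x j * fderiv ℝ f x (EuclideanSpace.single j 1) := rfl
    rw [hadv, hmat, hgq, hgf, hdD, hdv, hdot, WithLp.ofLp_sum, Finset.sum_apply]
    simp only [hflux, Finset.mul_sum, ← Finset.sum_add_distrib, ← Finset.sum_sub_distrib]
    exact Finset.sum_congr rfl fun j _ => by ring
  simp only [PiLp.add_apply, PiLp.sub_apply, PiLp.smul_apply, smul_eq_mul, PiLp.zero_apply] at hn ⊢
  rw [hsum, hdiv]
  linear_combination (-f x) * hn - v x i * htrans

/-- Weak (diffuse-volume) Lagrangian local momentum balance: if `u`, `p` are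
smooth on `(t₀,t₁) × Ω`, divergence free and solve the Navier–Stokes momentum equation there,
and `φ` is a `C¹` weight transported by the flow (`∂ₜφ + u·∇φ = 0`) whose spatial supports stay
in a fixed compact `K ⊆ Ω`, then for each `t ∈ (t₀,t₁)` the map `t ↦ ∫_Ω φ u dx` is
differentiable with derivative `∫_Ω [−2ν D(u)∇φ + p ∇φ] dx`. -/
theorem weak_lagrangian_momentum_balance (d : ℕ) (hd : 1 ≤ d)
    (Ω : Set (EuclideanSpace ℝ (Fin d))) (hΩ : IsOpen Ω) (ν : ℝ) (hν : 0 ≤ ν)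
    (t₀ t₁ : ℝ) (ht : t₀ < t₁)
    (u : ℝ → EuclideanSpace ℝ (Fin d) → EuclideanSpace ℝ (Fin d))
    (p : ℝ → EuclideanSpace ℝ (Fin d) → ℝ)
    (φ : ℝ → EuclideanSpace ℝ (Fin d) → ℝ)
    (hu : ContDiffOn ℝ (⊤ : ℕ∞) (Function.uncurry u) (Set.Ioo t₀ t₁ ×ˢ Ω))
    (hp : ContDiffOn ℝ (⊤ : ℕ∞) (Function.uncurry p) (Set.Ioo t₀ t₁ ×ˢ Ω))
    (hdiv : ∀ t ∈ Set.Ioo t₀ t₁, ∀ x ∈ Ω, dvg (u t) x = 0)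
    (hnse : ∀ t ∈ Set.Ioo t₀ t₁, ∀ x ∈ Ω,
      deriv (fun s => u s x) t + fderiv ℝ (u t) x (u t x)
        - (2 * ν) • divD (u t) x + grd (p t) x = 0)
    (hφ : ContDiffOn ℝ 1 (Function.uncurry φ) (Set.Ioo t₀ t₁ ×ˢ Ω))
    (htrans : ∀ t ∈ Set.Ioo t₀ t₁, ∀ x ∈ Ω,
      deriv (fun s => φ s x) t + dotp (u t x) (grd (φ t) x) = 0)
    (K : Set (EuclideanSpace ℝ (Fin d))) (hK : IsCompact K) (hKΩ : K ⊆ Ω)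
    (hsupp : ∀ t ∈ Set.Ioo t₀ t₁, tsupport (φ t) ⊆ K) :
    ∀ t ∈ Set.Ioo t₀ t₁,
      HasDerivAt (fun s => ∫ x in Ω, φ s x • u s x)
        (∫ x in Ω, ((-(2 * ν)) • matVec (defT (u t) x) (grd (φ t) x)
          + p t x • grd (φ t) x)) t := by
  intro t htI
  have hO : IsOpen (Set.Ioo t₀ t₁ ×ˢ Ω) := isOpen_Ioo.prod hΩ
  have hslice : MapsTo (fun x : EuclideanSpace ℝ (Fin d) => (t, x)) Ω (Set.Ioo t₀ t₁ ×ˢ Ω) :=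
    fun x hx => ⟨htI, hx⟩
  have hsm : ContDiff ℝ (⊤ : ℕ∞) (fun x : EuclideanSpace ℝ (Fin d) => (t, x)) := by fun_prop
  have hu2 : ContDiffOn ℝ 2 (u t) Ω :=
    (hu.comp hsm.contDiffOn hslice).of_le (WithTop.coe_le_coe.2 (le_top : (2 : ℕ∞) ≤ ⊤))
  have hp1 : ContDiffOn ℝ 1 (p t) Ω :=
    (hp.comp hsm.contDiffOn hslice).of_le (by exact_mod_cast le_top)
  have hφ1 : ContDiffOn ℝ 1 (φ t) Ω :=
    hφ.comp (hsm.of_le (by exact_mod_cast le_top)).contDiffOn hslice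
  have hu1 : ContDiffOn ℝ 1 (Function.uncurry u) (Set.Ioo t₀ t₁ ×ˢ Ω) :=
    hu.of_le (by exact_mod_cast le_top)
  have hφK : ∀ s ∈ Set.Ioo t₀ t₁, ∀ x, x ∉ K → φ s x = 0 := fun s hs x hx =>
    image_eq_zero_of_notMem_tsupport fun h => hx (hsupp s hs h)
  have hgrdK : ∀ x, x ∉ K → grd (φ t) x = 0 := by
    intro x hx
    have h0 : fderiv ℝ (φ t) x = 0 := image_eq_zero_of_notMem_tsupport fun h =>
      hx (hsupp t htI (tsupport_fderiv_subset ℝ h))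
    ext i
    simp [grd, h0]
  obtain ⟨hint, hder⟩ := hasDerivAt_setIntegral_of_contDiffOn
    (μ := (volume : Measure (EuclideanSpace ℝ (Fin d)))) (F := fun s x => φ s x • u s x)
    hΩ hK hKΩ (hφ.smul hu1) htI
  have hflux : ∀ j : Fin d,
      IntegrableOn (fun x => fderiv ℝ (fun y => φ t y • flux ν (u t) (p t) j y) x
        (EuclideanSpace.single j 1)) K volume ∧
      ∫ x in K, fderiv ℝ (fun y => φ t y • flux ν (u t) (p t) j y) x
        (EuclideanSpace.single j 1) = 0 := fun j => setIntegral_fderiv_apply_eq_zero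
    (μ := (volume : Measure (EuclideanSpace ℝ (Fin d)))) hΩ hK hKΩ
    (hφ1.smul (contDiffOn_flux hΩ ν hu2 hp1 j))
    ((closure_mono (Function.support_smul_subset_left _ _)).trans (hsupp t htI))
    (EuclideanSpace.single j 1)
  have hpt : ∀ x ∈ K, (-(2 * ν)) • matVec (defT (u t) x) (grd (φ t) x) + p t x • grd (φ t) x
      = deriv (fun s => φ s x • u s x) t
        - ∑ j, fderiv ℝ (fun y => φ t y • flux ν (u t) (p t) j y) x
            (EuclideanSpace.single j 1) := by
    intro x hx
    have hxΩ := hKΩ hx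
    have htd : DifferentiableAt ℝ (fun s : ℝ => (s, x)) t := by fun_prop
    have hφd : DifferentiableAt ℝ (fun s => φ s x) t :=
      ((hφ.differentiableOn one_ne_zero).differentiableAt (hO.mem_nhds ⟨htI, hxΩ⟩)).comp t htd
    have hud : DifferentiableAt ℝ (fun s => u s x) t :=
      ((hu1.differentiableOn one_ne_zero).differentiableAt (hO.mem_nhds ⟨htI, hxΩ⟩)).comp t htd
    rw [deriv_fun_smul hφd hud]
    exact momentum_rate_eq ν hΩ hu2 hp1 hφ1 hxΩ (hdiv t htI x hxΩ) (hnse t htI x hxΩ)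
      (htrans t htI x hxΩ)
  have hout : ∀ x ∈ Ω \ K,
      (-(2 * ν)) • matVec (defT (u t) x) (grd (φ t) x) + p t x • grd (φ t) x = 0 := by
    intro x hx
    rw [hgrdK x hx.2]
    ext i
    simp [matVec]
  have hrate : ∫ x in Ω, ((-(2 * ν)) • matVec (defT (u t) x) (grd (φ t) x)
      + p t x • grd (φ t) x) = ∫ x in K, deriv (fun s => φ s x • u s x) t := by
    rw [setIntegral_eq_of_subset_of_forall_sdiff_eq_zero hΩ.measurableSet hKΩ hout,
      setIntegral_congr_fun hK.measurableSet hpt,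
      integral_sub hint (integrable_finsetSum _ fun j _ => (hflux j).1),
      integral_finsetSum _ fun j _ => (hflux j).1, Finset.sum_eq_zero fun j _ => (hflux j).2,
      sub_zero]
  rw [hrate]
  refine hder.congr_of_eventuallyEq ?_
  filter_upwards [Ioo_mem_nhds htI.1 htI.2] with s hs
  exact setIntegral_eq_of_subset_of_forall_sdiff_eq_zero hΩ.measurableSet hKΩ fun x hx => by
    rw [hφK s hs x hx.2, zero_smul]

end
end

section
/- Let ν ≥ 0. Let u : ℝ × ℝ³ → ℝ³ be C¹ and p̂ : ℝ × ℝ³ → ℝ be continuous, and let φ : ℝ³ → ℝ be C¹ with compact support. Assume that at every time t and for every constant vector c ∈ ℝ³, the EMAC variational identity ∫_{ℝ³} [ ∂ₜu·v + 2(D(u)u)·v + (div u)(u·v) + 2ν ⟨D(u), D(v)⟩_F − p̂ (div v) ] dx = 0 holds with the test field v(x) = φ(x) (x × c). Then, setting p = p̂ + ½‖u‖², for every t the map t ↦ ∫_{ℝ³} φ (u × x) dx is differentiable with derivative ∫_{ℝ³} [ −2ν (D(u)∇φ) × x + p (∇φ × x) + (u·∇φ)(u × x) ] dx, where x denotes the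 position vector. -/
/-!
Fix a constant vector `c` and put `v(x) = φ(x) (x × c)`. The linear field `x ↦ x × c` has
antisymmetric, trace-free Jacobian, so `⟨D(u), D(v)⟩ = D(u)∇φ · (x × c)`,
`div v = ∇φ · (x × c)` and `∑ᵢⱼ uᵢ uⱼ ∂ⱼvᵢ = (u·∇φ) u·(x × c)`. Moreover
`a · (x × c) = (a × x) · c`. With the field `W = (u·v) u + ½ (u·u) v` this gives, pointwise, that
the EMAC integrand equals `(φ ∂ₜu × x − R) · c + div W`, where `R` is the integrand on the
right-hand side of the balance (`emac_pointwise`).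

Since `W` is `C¹` with compact support, `∫ div W = 0` (`integral_fderiv_eq_zero`), so the EMAC
identity says `(∫ φ ∂ₜu × x − ∫ R) · c = 0` for every `c`, i.e. the two integrals agree. Finally
`∫ φ ∂ₜu × x` is the time derivative of `∫ φ u × x` by differentiation under the integral sign
(`hasDerivAt_integral_of_compactSupport`).
-/


open MeasureTheory Real Set Filter Matrix

noncomputable section

theorem cross_apply_zero (a b : EuclideanSpace ℝ (Fin 3)) :
    cross a b 0 = a 1 * b 2 - a 2 * b 1 := by
  simp [cross, crossProduct]

theorem cross_apply_one (a b : EuclideanSpace ℝ (Fin 3)) :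
    cross a b 1 = a 2 * b 0 - a 0 * b 2 := by
  simp [cross, crossProduct]

theorem cross_apply_two (a b : EuclideanSpace ℝ (Fin 3)) :
    cross a b 2 = a 0 * b 1 - a 1 * b 0 := by
  simp [cross, crossProduct]

theorem continuous_cross {X : Type*} [TopologicalSpace X] {f g : X → EuclideanSpace ℝ (Fin 3)}
    (hf : Continuous f) (hg : Continuous g) : Continuous fun x => cross (f x) (g x) := by
  refine (PiLp.continuous_toLp 2 _).comp (continuous_pi fun i => ?_)
  fin_cases i <;> simp [crossProduct] <;> fun_prop

/-- The continuous linear map `y ↦ y × c`. -/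
def crossRight (c : EuclideanSpace ℝ (Fin 3)) :
    EuclideanSpace ℝ (Fin 3) →L[ℝ] EuclideanSpace ℝ (Fin 3) :=
  LinearMap.toContinuousLinearMap
    { toFun := fun y => cross y c
      map_add' := fun a b => by simp [cross]
      map_smul' := fun r a => by simp [cross] }

theorem crossRight_apply (c y : EuclideanSpace ℝ (Fin 3)) : crossRight c y = cross y c := rfl

theorem dotp_eq_inner {d : ℕ} (a b : EuclideanSpace ℝ (Fin d)) : dotp a b = inner ℝ b a := by
  simp [dotp, PiLp.inner_apply]

theorem continuous_dotp {d : ℕ} {X : Type*} [TopologicalSpace X]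
    {f g : X → EuclideanSpace ℝ (Fin d)}
    (hf : Continuous f) (hg : Continuous g) : Continuous fun x => dotp (f x) (g x) := by
  simp only [dotp]; fun_prop

theorem continuous_grd {d : ℕ} {φ : EuclideanSpace ℝ (Fin d) → ℝ} (hφ : ContDiff ℝ 1 φ) :
    Continuous (grd φ) :=
  (PiLp.continuous_toLp 2 _).comp
    (continuous_pi fun _ => (hφ.continuous_fderiv one_ne_zero).clm_apply continuous_const)

theorem continuous_jac_apply {d : ℕ} {u : EuclideanSpace ℝ (Fin d) → EuclideanSpace ℝ (Fin d)}
    (hu : ContDiff ℝ 1 u) (i j : Fin d) : Continuous fun x => jac u x i j := by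
  have h := (hu.continuous_fderiv one_ne_zero).clm_apply
    (continuous_const (y := EuclideanSpace.single j (1 : ℝ)))
  simp only [jac]
  fun_prop

theorem continuous_matVec_defT {d : ℕ}
    {u g : EuclideanSpace ℝ (Fin d) → EuclideanSpace ℝ (Fin d)}
    (hu : ContDiff ℝ 1 u) (hg : Continuous g) : Continuous fun x => matVec (defT u x) (g x) := by
  have h := continuous_jac_apply hu
  refine (PiLp.continuous_toLp 2 _).comp (continuous_pi fun i => ?_)
  simp only [Matrix.mulVec, dotProduct, defT, Matrix.smul_apply, Matrix.add_apply,
    Matrix.transpose_apply, smul_eq_mul]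
  refine continuous_finsetSum _ fun j _ => ?_
  have h1 := h i j
  have h2 := h j i
  have h3 : Continuous fun x => g x j := by fun_prop
  exact (continuous_const.mul (h1.add h2)).mul h3

/-- The Jacobian of `φ (x × c)`; its second term is the antisymmetric matrix of `y ↦ y × c`,
scaled by `φ`. -/
theorem jac_smul_cross {φ : EuclideanSpace ℝ (Fin 3) → ℝ} {x : EuclideanSpace ℝ (Fin 3)}
    (hφ : DifferentiableAt ℝ φ x) (c : EuclideanSpace ℝ (Fin 3)) (i j : Fin 3) :
    jac (fun y => φ y • cross y c) x i j
      = grd φ x j * cross x c i + φ x * cross (EuclideanSpace.single j 1) c i := by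
  have h : HasFDerivAt (fun y => φ y • cross y c) _ x :=
    hφ.hasFDerivAt.smul (crossRight c).hasFDerivAt
  simp [jac, h.fderiv, crossRight_apply, grd]
  ring

/-- The term `∂ⱼWⱼ` of the divergence of `W = (u·v) u + ½ (u·u) v`, by the product rule. -/
theorem sum_fderiv_flux {d : ℕ} {u v : EuclideanSpace ℝ (Fin d) → EuclideanSpace ℝ (Fin d)}
    {x : EuclideanSpace ℝ (Fin d)} (hu : DifferentiableAt ℝ u x) (hv : DifferentiableAt ℝ v x)
    (j : Fin d) :
    fderiv ℝ (fun y => dotp (u y) (v y) * u y j + (1/2) * dotp (u y) (u y) * v y j) x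
        (EuclideanSpace.single j 1)
      = (∑ i, (jac u x i j * v x i + u x i * jac v x i j)) * u x j
        + dotp (u x) (v x) * jac u x j j
        + (∑ i, u x i * jac u x i j) * v x j + (1/2) * dotp (u x) (u x) * jac v x j j := by
  have hc : ∀ {w : EuclideanSpace ℝ (Fin d) → EuclideanSpace ℝ (Fin d)},
      DifferentiableAt ℝ w x → ∀ i, HasFDerivAt (fun y => w y i)
        ((EuclideanSpace.proj i : EuclideanSpace ℝ (Fin d) →L[ℝ] ℝ).comp (fderiv ℝ w x)) x :=
    fun hw i => (EuclideanSpace.proj i : EuclideanSpace ℝ (Fin d) →L[ℝ] ℝ).hasFDerivAt.comp x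
      hw.hasFDerivAt
  have hdot : ∀ {w z : EuclideanSpace ℝ (Fin d) → EuclideanSpace ℝ (Fin d)},
      DifferentiableAt ℝ w x → DifferentiableAt ℝ z x →
      HasFDerivAt (fun y => dotp (w y) (z y)) _ x :=
    fun hw hz => HasFDerivAt.fun_sum (u := Finset.univ) fun i _ => (hc hw i).mul (hc hz i)
  have h := ((hdot hu hv).mul (hc hu j)).add (((hdot hu hu).const_mul (1/2 : ℝ)).mul (hc hv j))
  rw [HasFDerivAt.fderiv (f := fun y => dotp (u y) (v y) * u y j
    + (1/2) * dotp (u y) (u y) * v y j) h]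
  simp [jac, Finset.sum_add_distrib, mul_comm]
  ring

/-- The EMAC integrand for `v = φ (x × c)` is `(φ a × x - R) · c + div W`, where `a` stands for
the value of `∂ₜu`, `q` for that of `p̂`, `R` is the integrand of the balance law and
`W = (u·v) u + ½ (u·u) v`. -/
theorem emac_pointwise {u : EuclideanSpace ℝ (Fin 3) → EuclideanSpace ℝ (Fin 3)}
    {φ : EuclideanSpace ℝ (Fin 3) → ℝ} {x : EuclideanSpace ℝ (Fin 3)}
    (hu : DifferentiableAt ℝ u x) (hφ : DifferentiableAt ℝ φ x)
    (ν q : ℝ) (a c : EuclideanSpace ℝ (Fin 3)) :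
    dotp a (φ x • cross x c)
        + 2 * dotp (matVec (defT u x) (u x)) (φ x • cross x c)
        + dvg u x * dotp (u x) (φ x • cross x c)
        + 2 * ν * frob (defT u x) (defT (fun y => φ y • cross y c) x)
        - q * dvg (fun y => φ y • cross y c) x
      = dotp (φ x • cross a x - ((-(2 * ν)) • cross (matVec (defT u x) (grd φ x)) x
          + (q + (1/2) * ‖u x‖ ^ 2) • cross (grd φ x) x
          + dotp (u x) (grd φ x) • cross (u x) x)) c
        + ∑ j, fderiv ℝ (fun y => dotp (u y) (φ y • cross y c) * u y j
            + (1/2) * dotp (u y) (u y) * (φ y • cross y c) j) x (EuclideanSpace.single j 1) := by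
  have hv : DifferentiableAt ℝ (fun y => φ y • cross y c) x :=
    hφ.smul (crossRight c).differentiableAt
  simp only [sum_fderiv_flux hu hv]
  simp only [frob, dvg, defT, Matrix.trace, Matrix.diag, Matrix.smul_apply, Matrix.add_apply,
    Matrix.transpose_apply, jac_smul_cross hφ]
  simp only [EuclideanSpace.real_norm_sq_eq, dotp, matVec, Matrix.mulVec, dotProduct,
    Fin.sum_univ_three, cross_apply_zero, cross_apply_one, cross_apply_two, PiLp.add_apply,
    PiLp.sub_apply, PiLp.smul_apply, smul_eq_mul, Matrix.smul_apply, Matrix.add_apply,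
    Matrix.transpose_apply, PiLp.continuousLinearEquiv_symm_apply,
    PiLp.continuousLinearEquiv_apply]
  simp
  ring

theorem integral_fderiv_eq_zero {d : ℕ} {f : EuclideanSpace ℝ (Fin d) → ℝ}
    (hf : ContDiff ℝ 1 f) (hc : HasCompactSupport f) (e : EuclideanSpace ℝ (Fin d)) :
    Integrable (fun x => fderiv ℝ f x e) ∧ ∫ x, fderiv ℝ f x e = 0 := by
  have hi : Integrable (fun x => fderiv ℝ f x e) :=
    ((hf.continuous_fderiv one_ne_zero).clm_apply continuous_const).integrable_of_hasCompactSupport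
      (hc.fderiv_apply ℝ e)
  refine ⟨hi, ?_⟩
  -- integration by parts against the constant function `1`
  have h := integral_mul_fderiv_eq_neg_fderiv_mul_of_integrable (μ := volume)
    (f := fun _ : EuclideanSpace ℝ (Fin d) => (1 : ℝ)) (g := f) (v := e)
    (by simp) (by simpa using hi)
    (by simpa using hf.continuous.integrable_of_hasCompactSupport hc)
    (fun _ _ => differentiableAt_const _) (fun x _ => hf.differentiable one_ne_zero x)
  simpa using h

/-- Differentiation under the integral sign for a family supported in a fixed compact set. -/
theorem hasDerivAt_integral_of_compactSupport {E F : Type*} [TopologicalSpace E] [T2Space E]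
    [MeasurableSpace E] [OpensMeasurableSpace E] {μ : Measure E} [IsFiniteMeasureOnCompacts μ]
    [NormedAddCommGroup F] [NormedSpace ℝ F] [SecondCountableTopology F]
    {f f' : ℝ → E → F} {K : Set E} (hK : IsCompact K)
    (hf : ∀ s, Continuous (f s)) (hf' : Continuous (Function.uncurry f'))
    (hf0 : ∀ s, ∀ x ∉ K, f s x = 0) (hf'0 : ∀ s, ∀ x ∉ K, f' s x = 0)
    (hd : ∀ s x, HasDerivAt (fun r => f r x) (f' s x) s) (t : ℝ) :
    Integrable (f' t) μ ∧ HasDerivAt (fun s => ∫ x, f s x ∂μ) (∫ x, f' t x ∂μ) t := by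
  obtain ⟨C, hC⟩ := ((isCompact_Icc (a := t - 1) (b := t + 1)).prod hK).exists_bound_of_continuousOn
    hf'.continuousOn
  borelize F
  refine hasDerivAt_integral_of_dominated_loc_of_deriv_le (bound := K.indicator fun _ => C)
    (Icc_mem_nhds (by linarith : t - 1 < t) (by linarith : t < t + 1))
    (.of_forall fun s => (hf s).measurable.aestronglyMeasurable)
    ((hf t).integrable_of_hasCompactSupport (.intro hK (hf0 t)))
    (hf'.comp (Continuous.prodMk_right t)).measurable.aestronglyMeasurable
    (.of_forall fun x s hs => ?_)
    ((integrable_indicator_iff hK.measurableSet).2 (integrableOn_const hK.measure_lt_top.ne))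
    (.of_forall fun x s _ => hd s x)
  by_cases hx : x ∈ K
  · simpa [hx] using hC (s, x) ⟨hs, hx⟩
  · simp [hx, hf'0 s x hx]

/-- If the EMAC variational identity holds at every time when tested against
all fields `v = φ (x × c)` with `c` a constant vector, then with `p = p̂ + ½‖u‖²` the weak
(diffuse-volume) Eulerian local angular momentum balance holds:
`d/dt ∫ φ (u × x) dx = ∫ [−2ν (D(u)∇φ) × x + p (∇φ × x) + (u·∇φ)(u × x)] dx`. -/
theorem emac_weak_eulerian_angular_momentum (ν : ℝ) (hν : 0 ≤ ν)
    (u : ℝ → EuclideanSpace ℝ (Fin 3) → EuclideanSpace ℝ (Fin 3))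
    (phat : ℝ → EuclideanSpace ℝ (Fin 3) → ℝ)
    (φ : EuclideanSpace ℝ (Fin 3) → ℝ)
    (hu : ContDiff ℝ 1 (Function.uncurry u))
    (hphat : Continuous (Function.uncurry phat))
    (hφ : ContDiff ℝ 1 φ) (hφc : HasCompactSupport φ)
    (hEMAC : ∀ (t : ℝ) (c : EuclideanSpace ℝ (Fin 3)),
      (∫ x, (dotp (deriv (fun s => u s x) t) (φ x • cross x c)
        + 2 * dotp (matVec (defT (u t) x) (u t x)) (φ x • cross x c)
        + dvg (u t) x * dotp (u t x) (φ x • cross x c)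
        + 2 * ν * frob (defT (u t) x) (defT (fun y => φ y • cross y c) x)
        - phat t x * dvg (fun y => φ y • cross y c) x)) = 0) :
    ∀ t : ℝ,
      HasDerivAt (fun s => ∫ x, φ x • cross (u s x) x)
        (∫ x, ((-(2 * ν)) • cross (matVec (defT (u t) x) (grd φ x)) x
          + (phat t x + (1/2) * ‖u t x‖ ^ 2) • cross (grd φ x) x
          + dotp (u t x) (grd φ x) • cross (u t x) x)) t := by
  intro t
  have hK : IsCompact (tsupport φ) := hφc
  have hφ0 : ∀ x ∉ tsupport φ, φ x = 0 := fun x hx => image_eq_zero_of_notMem_tsupport hx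
  have hg0 : ∀ x ∉ tsupport φ, grd φ x = 0 := fun x hx => by
    ext i; simp [grd, fderiv_of_notMem_tsupport ℝ hx]
  have hus : ∀ s, ContDiff ℝ 1 (u s) := fun s => hu.comp (contDiff_prodMk_right s)
  have hut : ∀ s x, HasDerivAt (fun r => u r x) (fderiv ℝ (Function.uncurry u) (s, x) (1, 0)) s :=
    fun s x => (hu.differentiable one_ne_zero (s, x)).hasFDerivAt.comp_hasDerivAt
      (f := fun r => (r, x)) s ((hasDerivAt_id s).prodMk (hasDerivAt_const s x))
  have hut_cont : Continuous fun p : ℝ × EuclideanSpace ℝ (Fin 3) =>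
      deriv (fun r => u r p.2) p.1 := by
    simp only [fun (p : ℝ × EuclideanSpace ℝ (Fin 3)) => (hut p.1 p.2).deriv]
    exact (hu.continuous_fderiv one_ne_zero).clm_apply continuous_const
  obtain ⟨hAi, hA⟩ := hasDerivAt_integral_of_compactSupport (μ := volume)
    (f := fun s x => φ x • cross (u s x) x)
    (f' := fun s x => φ x • cross (deriv (fun r => u r x) s) x) hK
    (fun s => hφ.continuous.smul (continuous_cross (hus s).continuous continuous_id))
    ((hφ.continuous.comp continuous_snd).smul (continuous_cross hut_cont continuous_snd))
    (fun s x hx => by simp [hφ0 x hx]) (fun s x hx => by simp [hφ0 x hx])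
    (fun s x => by
      have h := (crossRight x).hasFDerivAt.comp_hasDerivAt s (hut s x)
      rw [← (hut s x).deriv] at h
      exact h.const_smul (φ x)) t
  refine hA.congr_deriv ?_
  have hpc : Continuous (phat t) := hphat.comp (Continuous.prodMk_right t)
  have hRi : Integrable fun x => ((-(2 * ν)) • cross (matVec (defT (u t) x) (grd φ x)) x
      + (phat t x + (1/2) * ‖u t x‖ ^ 2) • cross (grd φ x) x
      + dotp (u t x) (grd φ x) • cross (u t x) x) := by
    have hgc := continuous_grd hφ
    have huc := (hus t).continuous
    refine Continuous.integrable_of_hasCompactSupport ?_ (.intro hK fun x hx => ?_)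
    · have h1 := continuous_cross (continuous_matVec_defT (hus t) hgc) continuous_id
      have h2 := continuous_cross hgc continuous_id
      have h3 := continuous_cross huc continuous_id
      have h4 := continuous_dotp huc hgc
      simp only [id] at h1 h2 h3
      fun_prop
    · rw [hg0 x hx]
      ext i
      fin_cases i <;> simp [cross, matVec, dotp]
  refine sub_eq_zero.1 ?_
  rw [← integral_sub hAi hRi]
  refine ext_inner_left ℝ fun c => ?_
  rw [inner_zero_right]
  refine (integral_inner (hAi.sub hRi) c).symm.trans ?_
  simp only [Pi.sub_apply, ← dotp_eq_inner]
  have hW : ∀ j : Fin 3, _ := fun j => integral_fderiv_eq_zero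
    (f := fun y => dotp (u t y) (φ y • cross y c) * u t y j
      + (1/2) * dotp (u t y) (u t y) * (φ y • cross y c) j)
    (by
      have h1 := hus t
      have h2 : ContDiff ℝ 1 fun y => φ y • cross y c := hφ.smul (crossRight c).contDiff
      have h3 : ∀ i, ContDiff ℝ 1 fun y => (φ y • cross y c) i := contDiff_euclidean.1 h2
      have h4 : ∀ i, ContDiff ℝ 1 fun y => u t y i := contDiff_euclidean.1 h1
      simp only [dotp]
      exact ((ContDiff.sum fun i _ => (h4 i).mul (h3 i)).mul (h4 j)).add
        ((contDiff_const.mul (ContDiff.sum fun i _ => (h4 i).mul (h4 i))).mul (h3 j)))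
    (.intro hK fun x hx => by simp [hφ0 x hx, dotp]) (EuclideanSpace.single j 1)
  have h := hEMAC t c
  simp only [emac_pointwise ((hus t).differentiable one_ne_zero _)
    (hφ.differentiable one_ne_zero _)] at h
  rw [integral_add, integral_finsetSum _ fun j _ => (hW j).1,
    Finset.sum_eq_zero fun j _ => (hW j).2, add_zero] at h
  · exact h
  · simp only [dotp_eq_inner]
    exact (hAi.sub hRi).const_inner c
  · exact integrable_finsetSum _ fun j _ => (hW j).1

end
end
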